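/- Let Y be a topological space, let B ⊆ Y be a subset, and write ∂ := (Y × {0,1}) ∪ (B × [0,1]) ⊆ Y × [0,1]. Let f : Y × [0,1] → Y × [0,1] be a continuous map such that f(y,0) = (y,0) for all y ∈ Y, f(b,t) = (b,t) for all b ∈ B and t ∈ [0,1], and f maps Y × {1} into Y × {1}. Then f is homotopic to the identity map of Y × [0,1] through a homotopy H : (Y × [0,1]) × [0,1] → Y × [0,1] such that every stage H(·,s) maps ∂ into ∂ (i.e. the homotopy is through maps of pairs (Y × [0,1], ∂) → (Y × [0,1], ∂)), and which moreover fixes (Y × {0}) ∪ (B × [0,1]) pointwise at every stage. -/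

import Mathlib

noncomputable section

/-- For `B ⊆ Y`, the subset `∂ = (Y × {0,1}) ∪ (B × [0,1])` of `Y × [0,1]`. -/
def pairBoundary {Y : Type*} (B : Set Y) : Set (Y × (Set.Icc (0:ℝ) 1)) :=
  (Set.univ ×ˢ ({0, 1} : Set (Set.Icc (0:ℝ) 1))) ∪ (B ×ˢ Set.univ)

/-!
Write `f (y, t) = (γ (y, t), τ (y, t))`. Shrinking the time at which `γ` is evaluated from `t` to
`0`, while moving `τ (y, t)` along a segment to `t`, deforms `f` to `(y, t) ↦ (γ (y, 0), t)`, which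
is the identity when `γ (y, 0) = y`. A point whose height `f` preserves keeps its height throughout,
and a fibre `{y} × [0,1]` fixed by `f` stays fixed.
-/

open Set unitInterval

theorem mem_pairBoundary {Y : Type*} {B : Set Y} {p : Y × I} :
    p ∈ pairBoundary B ↔ (p.2 = 0 ∨ p.2 = 1) ∨ p.1 ∈ B := by
  simp [pairBoundary]

/-- The homotopy from `f : Y × [0,1] → Z × [0,1]` to the product map `(y, t) ↦ ((f (y, 0)).1, t)`,
with the homotopy parameter as last coordinate. It carries out the two successive deformations
`f_s` and `f_{1,s}` of the paper simultaneously. -/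
def cylinderStraightening {Y Z : Type*} (f : Y × I → Z × I) (q : (Y × I) × I) : Z × I :=
  ((f (q.1.1, σ q.2 * q.1.2)).1, Icc.convexComb (f q.1).2 q.1.2 q.2)

namespace cylinderStraightening

variable {Y Z : Type*} {f : Y × I → Z × I}

protected theorem continuous [TopologicalSpace Y] [TopologicalSpace Z] (hf : Continuous f) :
    Continuous (cylinderStraightening f) := by
  have continuous_height : Continuous fun q : (Y × I) × I ↦
      Icc.convexComb (f q.1).2 q.1.2 q.2 :=
    Icc.continuous_convexComb_prod.comp
      (f := fun q : (Y × I) × I ↦ ((f q.1).2, q.1.2, q.2)) (by fun_prop)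
  exact Continuous.prodMk (by fun_prop) continuous_height

theorem apply_zero_right (f : Y × I → Z × I) (p : Y × I) :
    cylinderStraightening f (p, 0) = f p := by
  simp [cylinderStraightening]

theorem apply_one_right (f : Y × I → Z × I) (p : Y × I) :
    cylinderStraightening f (p, 1) = ((f (p.1, 0)).1, p.2) := by
  simp [cylinderStraightening]

theorem snd_eq_of_snd_eq {p : Y × I} (hp : (f p).2 = p.2) (s : I) :
    (cylinderStraightening f (p, s)).2 = p.2 := by
  simp [cylinderStraightening, hp]

theorem apply_bottom {y : Y} (hy : (f (y, 0)).2 = 0) (s : I) :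
    cylinderStraightening f ((y, 0), s) = f (y, 0) :=
  Prod.ext (by simp [cylinderStraightening]) ((snd_eq_of_snd_eq hy s).trans hy.symm)

theorem apply_of_forall_apply_eq {y : Y} {z : Z} (hy : ∀ t, f (y, t) = (z, t)) (t s : I) :
    cylinderStraightening f ((y, t), s) = (z, t) := by
  simp [cylinderStraightening, hy]

theorem mapsTo_pairBoundary {B : Set Y} {C : Set Z} (h0 : ∀ y, (f (y, 0)).2 = 0)
    (h1 : ∀ y, (f (y, 1)).2 = 1) (hBC : ∀ b ∈ B, ∀ t, (f (b, t)).1 ∈ C) (s : I) :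
    MapsTo (fun p ↦ cylinderStraightening f (p, s)) (pairBoundary B) (pairBoundary C) := by
  rintro ⟨y, t⟩ hp
  rw [mem_pairBoundary] at hp ⊢
  rcases hp with (rfl | rfl) | hy
  · exact Or.inl (Or.inl (snd_eq_of_snd_eq (h0 y) s))
  · exact Or.inl (Or.inr (snd_eq_of_snd_eq (h1 y) s))
  · exact Or.inr (hBC y hy _)

end cylinderStraightening

/-- Let `Y` be a topological space, `B ⊆ Y`, and `∂ = (Y × {0,1}) ∪ (B × [0,1])`.
If `f : Y × [0,1] → Y × [0,1]` is a continuous map with `f(y,0) = (y,0)` for all `y`,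
`f(b,t) = (b,t)` for all `b ∈ B` and `t`, and `f` maps `Y × {1}` into `Y × {1}`, then
`f` is homotopic to the identity through maps of pairs `(Y × [0,1], ∂) → (Y × [0,1], ∂)`,
by a homotopy fixing `(Y × {0}) ∪ (B × [0,1])` pointwise at every stage. -/
theorem homotopic_id_rel_pairBoundary {Y : Type*} [TopologicalSpace Y] (B : Set Y)
    (f : Y × (Set.Icc (0:ℝ) 1) → Y × (Set.Icc (0:ℝ) 1)) (hf : Continuous f)
    (h0 : ∀ y : Y, f (y, 0) = (y, 0))
    (hB : ∀ b ∈ B, ∀ t : Set.Icc (0:ℝ) 1, f (b, t) = (b, t))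
    (h1 : ∀ y : Y, (f (y, 1)).2 = 1) :
    ∃ H : (Y × (Set.Icc (0:ℝ) 1)) × (Set.Icc (0:ℝ) 1) → Y × (Set.Icc (0:ℝ) 1),
      Continuous H ∧
      (∀ p, H (p, 0) = f p) ∧
      (∀ p, H (p, 1) = p) ∧
      (∀ s : Set.Icc (0:ℝ) 1, ∀ p ∈ pairBoundary B, H (p, s) ∈ pairBoundary B) ∧
      (∀ s : Set.Icc (0:ℝ) 1, ∀ y : Y, H ((y, 0), s) = (y, 0)) ∧
      (∀ s : Set.Icc (0:ℝ) 1, ∀ b ∈ B, ∀ t : Set.Icc (0:ℝ) 1, H ((b, t), s) = (b, t)) := by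
  refine ⟨cylinderStraightening f, cylinderStraightening.continuous hf,
    cylinderStraightening.apply_zero_right f, fun p ↦ ?_, fun s ↦ ?_, fun s y ↦ ?_,
    fun s b hb t ↦ cylinderStraightening.apply_of_forall_apply_eq (hB b hb) t s⟩
  · rw [cylinderStraightening.apply_one_right, h0]
  · have preserves_bottom (y : Y) : (f (y, 0)).2 = 0 := by rw [h0]
    have preserves_side : ∀ b ∈ B, ∀ t, (f (b, t)).1 ∈ B := fun b hb t ↦ by rwa [hB b hb]
    exact cylinderStraightening.mapsTo_pairBoundary preserves_bottom h1 preserves_side s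
  · rw [cylinderStraightening.apply_bottom (by rw [h0]), h0]
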